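/- arXiv:1707.05389 — 4 statements merged into one kernel-verified Lean document; each statement's English description precedes it below -/
import Mathlib

section
/- Let f1 : ℝ → ℝ be smooth, let F1(y) = ∫_0^y f1(s) ds, let f0 ∈ ℝ, and let g : ℝ² → ℝ be smooth. Let u : ℝ² → ℝ be a smooth function of (t,x) with u(t,x) > |u_x(t,x)| at every point, set m = u − u_xx, and suppose that at every point m_t + ( u_x · f1(u² − u_x²) + f0 · u/(u² − u_x²) ) · m + ∂_x( g(u,u_x) · m ) = 0. Then at every point ∂_t m + ∂_x[ g(u,u_x) · m + (1/2) F1(u² − u_x²) + (1/2) f0 · log( (u − u_x)/(u + u_x) ) + f0 · x ] = 0; that is, the momentum density m satisfies a local conservation law. -/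
open Real

noncomputable section

/-- Partial derivative in the first (time) variable. -/
def pt (f : ℝ → ℝ → ℝ) (t x : ℝ) : ℝ := deriv (fun s => f s x) t

/-- Partial derivative in the second (space) variable. -/
def px (f : ℝ → ℝ → ℝ) (t x : ℝ) : ℝ := deriv (fun y => f t y) x

/-- The momentum variable `m = u - u_xx`. -/
def mf (u : ℝ → ℝ → ℝ) (t x : ℝ) : ℝ := u t x - px (px u) t x

/-!
For every `u`, solution or not, the zeroth-order term of the equation is already an `x`-derivative:
`∂_x (u² - u_x²) = 2 u_x m`, so `u_x f1(u² - u_x²) m` is the derivative of `F1(u² - u_x²) / 2`, and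
`∂_x (log ((u - u_x) / (u + u_x)) / 2 + x) = u m / (u² - u_x²)`.
-/

theorem differentiableAt_slice_of_uncurry {𝕜 E F G : Type*} [NontriviallyNormedField 𝕜]
    [NormedAddCommGroup E] [NormedSpace 𝕜 E] [NormedAddCommGroup F] [NormedSpace 𝕜 F]
    [NormedAddCommGroup G] [NormedSpace 𝕜 G] {f : E → F → G} {t : E} {x : F}
    (hf : DifferentiableAt 𝕜 (Function.uncurry f) (t, x)) : DifferentiableAt 𝕜 (f t) x :=
  hf.comp x ((differentiableAt_const t).prodMk differentiableAt_id)

theorem px_eq_of_hasDerivAt {f : ℝ → ℝ → ℝ} {t x f' : ℝ} (h : HasDerivAt (f t) f' x) :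
    px f t x = f' :=
  h.deriv

theorem hasDerivAt_px {f : ℝ → ℝ → ℝ} {t x : ℝ} (hf : DifferentiableAt ℝ (f t) x) :
    HasDerivAt (f t) (px f t x) x :=
  hf.hasDerivAt

theorem contDiff_uncurry_px {f : ℝ → ℝ → ℝ} {k n : WithTop ℕ∞}
    (hf : ContDiff ℝ n (Function.uncurry f)) (hkn : k + 1 ≤ n) :
    ContDiff ℝ k (Function.uncurry (px f)) := by
  have hslices : ContDiff ℝ n (Function.uncurry fun (p : ℝ × ℝ) (y : ℝ) => f p.1 y) :=
    hf.comp (contDiff_fst.fst.prodMk contDiff_snd)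
  exact hslices.fderiv_apply contDiff_snd contDiff_const hkn

theorem contDiff_uncurry_mf {u : ℝ → ℝ → ℝ} {k n : WithTop ℕ∞}
    (hu : ContDiff ℝ n (Function.uncurry u)) (hkn : k + 1 + 1 ≤ n) :
    ContDiff ℝ k (Function.uncurry (mf u)) :=
  (hu.of_le ((le_self_add.trans le_self_add).trans hkn)).sub
    (contDiff_uncurry_px (contDiff_uncurry_px hu hkn) le_rfl)

theorem hasDerivAt_log_sub_div_add {a b : ℝ → ℝ} {a' b' x : ℝ}
    (ha : HasDerivAt a a' x) (hb : HasDerivAt b b' x) (hab : a x ^ 2 - b x ^ 2 ≠ 0) :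
    HasDerivAt (fun y => log ((a y - b y) / (a y + b y)))
      (2 * (a' * b x - a x * b') / (a x ^ 2 - b x ^ 2)) x := by
  have hfactor : a x ^ 2 - b x ^ 2 = (a x + b x) * (a x - b x) := sq_sub_sq _ _
  obtain ⟨hadd, hsub⟩ := mul_ne_zero_iff.mp (hfactor ▸ hab)
  refine (((ha.sub hb).div (ha.add hb) hadd).log (div_ne_zero hsub hadd)).congr_deriv ?_
  simp only [Pi.add_apply, Pi.sub_apply, Pi.div_apply]
  rw [hfactor]
  field_simp
  ring

section SpatialPotentials

variable {u : ℝ → ℝ → ℝ} {t x : ℝ}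
  (hu : DifferentiableAt ℝ (u t) x) (hux : DifferentiableAt ℝ (px u t) x)

include hu hux

theorem hasDerivAt_sq_sub_px_sq :
    HasDerivAt (fun y => u t y ^ 2 - px u t y ^ 2) (2 * px u t x * mf u t x) x := by
  refine (((hasDerivAt_px hu).pow 2).sub ((hasDerivAt_px hux).pow 2)).congr_deriv ?_
  simp only [mf]
  ring

theorem hasDerivAt_half_log_add_id (hne : u t x ^ 2 - px u t x ^ 2 ≠ 0) :
    HasDerivAt (fun y => 1 / 2 * log ((u t y - px u t y) / (u t y + px u t y)) + y)
      (u t x / (u t x ^ 2 - px u t x ^ 2) * mf u t x) x := by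
  have hlog := hasDerivAt_log_sub_div_add (hasDerivAt_px hu) (hasDerivAt_px hux) hne
  refine ((hlog.const_mul (1 / 2)).add (hasDerivAt_id x)).congr_deriv ?_
  simp only [mf]
  field_simp
  ring

end SpatialPotentials

theorem momentum_conservation_general {f1 F1 : ℝ → ℝ} {f0 : ℝ} {flux u : ℝ → ℝ → ℝ} {t x : ℝ}
    (hF1 : HasDerivAt F1 (f1 (u t x ^ 2 - px u t x ^ 2)) (u t x ^ 2 - px u t x ^ 2))
    (hflux : DifferentiableAt ℝ (flux t) x)
    (hu : DifferentiableAt ℝ (u t) x) (hux : DifferentiableAt ℝ (px u t) x)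
    (habs : |px u t x| < |u t x|)
    (heq : pt (mf u) t x
        + (px u t x * f1 (u t x ^ 2 - px u t x ^ 2)
            + f0 * u t x / (u t x ^ 2 - px u t x ^ 2)) * mf u t x
        + px flux t x = 0) :
    pt (mf u) t x
        + px (fun t' x' => flux t' x'
              + (1 / 2) * F1 (u t' x' ^ 2 - px u t' x' ^ 2)
              + (1 / 2) * f0 * log ((u t' x' - px u t' x') / (u t' x' + px u t' x'))
              + f0 * x') t x = 0 := by
  have hne : u t x ^ 2 - px u t x ^ 2 ≠ 0 := (sub_pos.mpr (sq_lt_sq.mpr habs)).ne'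
  have hF1_comp := (hF1.comp x (hasDerivAt_sq_sub_px_sq hu hux)).const_mul (1 / 2)
  have hlog := (hasDerivAt_half_log_add_id hu hux hne).const_mul f0
  have htotal := ((hasDerivAt_px hflux).add hF1_comp).add hlog
  rw [px_eq_of_hasDerivAt (htotal.congr_of_eventuallyEq (.of_forall fun y => ?_))]
  · linear_combination heq
  · simp only [Pi.add_apply, Function.comp_apply]
    ring

/-- conservation of momentum for the family
`m_t + (u_x f1(u²-u_x²) + f0 u/(u²-u_x²)) m + ∂_x(g(u,u_x) m) = 0`. -/
theorem momentum_conservation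
    (f1 : ℝ → ℝ) (hf1 : ContDiff ℝ (⊤ : ℕ∞) f1)
    (F1 : ℝ → ℝ) (hF1 : ∀ y : ℝ, F1 y = ∫ s in (0:ℝ)..y, f1 s)
    (f0 : ℝ)
    (g : ℝ → ℝ → ℝ) (hg : ContDiff ℝ (⊤ : ℕ∞) (Function.uncurry g))
    (u : ℝ → ℝ → ℝ) (hu : ContDiff ℝ (⊤ : ℕ∞) (Function.uncurry u))
    (hpos : ∀ t x : ℝ, u t x > |px u t x|)
    (heq : ∀ t x : ℝ,
      pt (mf u) t x
        + (px u t x * f1 ((u t x)^2 - (px u t x)^2)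
            + f0 * u t x / ((u t x)^2 - (px u t x)^2)) * mf u t x
        + px (fun t' x' => g (u t' x') (px u t' x') * mf u t' x') t x = 0) :
    ∀ t x : ℝ,
      pt (mf u) t x
        + px (fun t' x' =>
            g (u t' x') (px u t' x') * mf u t' x'
              + (1/2) * F1 ((u t' x')^2 - (px u t' x')^2)
              + (1/2) * f0 * Real.log ((u t' x' - px u t' x') / (u t' x' + px u t' x'))
              + f0 * x') t x = 0 := by
  have hux := contDiff_uncurry_px (k := (⊤ : ℕ∞)) hu le_rfl
  have hm := contDiff_uncurry_mf (k := (⊤ : ℕ∞)) hu le_rfl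
  have hflux : ContDiff ℝ (⊤ : ℕ∞)
      (Function.uncurry fun t x => g (u t x) (px u t x) * mf u t x) :=
    (hg.comp (hu.prodMk hux)).mul hm
  have hF1' (y : ℝ) : HasDerivAt F1 (f1 y) y :=
    funext hF1 ▸ (hf1.continuous.integral_hasStrictDerivAt 0 y).hasDerivAt
  intro t x
  exact momentum_conservation_general (hF1' _)
    (differentiableAt_slice_of_uncurry (hflux.differentiable (by simp) (t, x)))
    (differentiableAt_slice_of_uncurry (hu.differentiable (by simp) (t, x)))
    (differentiableAt_slice_of_uncurry (hux.differentiable (by simp) (t, x)))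
    ((hpos t x).trans_le (le_abs_self _)) (heq t x)

end
end

section
/- Let u : ℝ → ℝ be a C² function such that u, u', and u'' are square-integrable on ℝ and u is not identically zero. Then ∫_ℝ (u − u'')² dx = ∫_ℝ ( u² + 2 u'² + u''² ) dx, and for every x₁, x₂ ∈ ℝ the strict inequality 2( u(x₁)² + u'(x₂)² ) < ∫_ℝ (u − u'')² dx holds. -/
open Real MeasureTheory

/-!
Integrating `(‖f‖²)' = 2⟪f, f'⟫` over each of the half-lines ending at `x` and completing squares,
`∫ (‖f‖² + ‖f'‖²) = 2 ‖f x‖² + ∫_{t ≤ x} ‖f - f'‖² + ∫_{t ≥ x} ‖f + f'‖²`.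
For continuous `f'`, vanishing of both remainders forces `f' x = f x` and `f' x = -f x`, hence
`f x = 0`, and then the inequality itself, applied at every point, gives `f = 0`.
Integration by parts turns `∫ ‖u - u''‖²` into the sum of the left-hand sides for `f = u` and
`f = u'`, so that it strictly dominates `2 ‖u x₁‖² + 2 ‖u' x₂‖²`.
-/

open Set Filter
open scoped InnerProductSpace Topology

theorem eqOn_zero_of_setIntegral_norm_sq_eq_zero {X F : Type*} [TopologicalSpace X]
    [MeasurableSpace X] {μ : Measure X} [μ.IsOpenPosMeasure] [NormedAddCommGroup F] {s : Set X}
    {f : X → F} (hs : s ⊆ closure (interior s)) (hf : ContinuousOn f s)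
    (hf2 : MemLp f 2 (μ.restrict s)) (h : ∫ x in s, ‖f x‖ ^ 2 ∂μ = 0) : EqOn f 0 s := by
  have hsq_ae : (fun x => ‖f x‖ ^ 2) =ᵐ[μ.restrict s] 0 :=
    (integral_eq_zero_iff_of_nonneg (fun _ => sq_nonneg _) hf2.norm.integrable_sq).1 h
  have hf_ae : f =ᵐ[μ.restrict s] 0 := hsq_ae.mono fun x hx => by simpa using hx
  exact Measure.eqOn_of_ae_eq hf_ae hf continuousOn_const hs

section InnerProductSpace

variable {E : Type*} [NormedAddCommGroup E] [InnerProductSpace ℝ E]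

theorem integrable_inner_of_memLp_two {α : Type*} [MeasurableSpace α] {μ : Measure α}
    {f g : α → E} (hf : MemLp f 2 μ) (hg : MemLp g 2 μ) :
    Integrable (fun x => ⟪f x, g x⟫_ℝ) μ :=
  memLp_one_iff_integrable.1 ((innerSL ℝ).memLp_of_bilin 1 hf hg)

section HalfLine

variable {f f' : ℝ → E} {x : ℝ}

theorem setIntegral_Iic_two_mul_inner_deriv (hf : ∀ t ∈ Iic x, HasDerivAt f (f' t) t)
    (hf2 : MemLp f 2 (volume.restrict (Iic x))) (hf'2 : MemLp f' 2 (volume.restrict (Iic x))) :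
    ∫ t in Iic x, 2 * ⟪f t, f' t⟫_ℝ = ‖f x‖ ^ 2 := by
  have hderiv : ∀ t ∈ Iic x, HasDerivAt (‖f ·‖ ^ 2) (2 * ⟪f t, f' t⟫_ℝ) t :=
    fun t ht => (hf t ht).norm_sq
  have hint : IntegrableOn (fun t => 2 * ⟪f t, f' t⟫_ℝ) (Iic x) :=
    (integrable_inner_of_memLp_two hf2 hf'2).const_mul 2
  have hlim : Tendsto (‖f ·‖ ^ 2) atBot (𝓝 0) :=
    tendsto_zero_of_hasDerivAt_of_integrableOn_Iic hderiv hint hf2.norm.integrable_sq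
  simpa using integral_Iic_of_hasDerivAt_of_tendsto' hderiv hint hlim

theorem setIntegral_Ici_two_mul_inner_deriv (hf : ∀ t ∈ Ici x, HasDerivAt f (f' t) t)
    (hf2 : MemLp f 2 (volume.restrict (Ici x))) (hf'2 : MemLp f' 2 (volume.restrict (Ici x))) :
    ∫ t in Ici x, 2 * ⟪f t, f' t⟫_ℝ = -‖f x‖ ^ 2 := by
  rw [← restrict_Ioi_eq_restrict_Ici] at hf2 hf'2 ⊢
  have hderiv : ∀ t ∈ Ici x, HasDerivAt (‖f ·‖ ^ 2) (2 * ⟪f t, f' t⟫_ℝ) t :=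
    fun t ht => (hf t ht).norm_sq
  have hint : IntegrableOn (fun t => 2 * ⟪f t, f' t⟫_ℝ) (Ioi x) :=
    (integrable_inner_of_memLp_two hf2 hf'2).const_mul 2
  have hlim : Tendsto (‖f ·‖ ^ 2) atTop (𝓝 0) :=
    tendsto_zero_of_hasDerivAt_of_integrableOn_Ioi (fun t ht => hderiv t (Ioi_subset_Ici_self ht))
      hint hf2.norm.integrable_sq
  simpa using integral_Ioi_of_hasDerivAt_of_tendsto' hderiv hint hlim

theorem setIntegral_Iic_norm_sq_add_norm_sq_deriv (hf : ∀ t ∈ Iic x, HasDerivAt f (f' t) t)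
    (hf2 : MemLp f 2 (volume.restrict (Iic x))) (hf'2 : MemLp f' 2 (volume.restrict (Iic x))) :
    ∫ t in Iic x, (‖f t‖ ^ 2 + ‖f' t‖ ^ 2) = ‖f x‖ ^ 2 + ∫ t in Iic x, ‖f t - f' t‖ ^ 2 := by
  have hinner : IntegrableOn (fun t => 2 * ⟪f t, f' t⟫_ℝ) (Iic x) :=
    (integrable_inner_of_memLp_two hf2 hf'2).const_mul 2
  have hsub : IntegrableOn (fun t => ‖f t - f' t‖ ^ 2) (Iic x) :=
    (hf2.sub hf'2).norm.integrable_sq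
  rw [← setIntegral_Iic_two_mul_inner_deriv hf hf2 hf'2, ← integral_add hinner hsub]
  congr with t
  rw [norm_sub_sq_real]
  ring

theorem setIntegral_Ici_norm_sq_add_norm_sq_deriv (hf : ∀ t ∈ Ici x, HasDerivAt f (f' t) t)
    (hf2 : MemLp f 2 (volume.restrict (Ici x))) (hf'2 : MemLp f' 2 (volume.restrict (Ici x))) :
    ∫ t in Ici x, (‖f t‖ ^ 2 + ‖f' t‖ ^ 2) = ‖f x‖ ^ 2 + ∫ t in Ici x, ‖f t + f' t‖ ^ 2 := by
  have hinner : IntegrableOn (fun t => 2 * ⟪f t, f' t⟫_ℝ) (Ici x) :=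
    (integrable_inner_of_memLp_two hf2 hf'2).const_mul 2
  have hadd : IntegrableOn (fun t => ‖f t + f' t‖ ^ 2) (Ici x) :=
    (hf2.add hf'2).norm.integrable_sq
  rw [← neg_eq_iff_eq_neg.2 (setIntegral_Ici_two_mul_inner_deriv hf hf2 hf'2), neg_add_eq_sub,
    ← integral_sub hadd hinner]
  congr with t
  rw [norm_add_sq_real]
  ring

end HalfLine

section Line

variable {f f' f'' : ℝ → E}

theorem integral_norm_sq_add_norm_sq_deriv (hf : ∀ t, HasDerivAt f (f' t) t)
    (hf2 : MemLp f 2) (hf'2 : MemLp f' 2) (x : ℝ) :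
    ∫ t, (‖f t‖ ^ 2 + ‖f' t‖ ^ 2)
      = 2 * ‖f x‖ ^ 2 + (∫ t in Iic x, ‖f t - f' t‖ ^ 2) + ∫ t in Ici x, ‖f t + f' t‖ ^ 2 := by
  have hint : Integrable (fun t => ‖f t‖ ^ 2 + ‖f' t‖ ^ 2) :=
    hf2.norm.integrable_sq.add hf'2.norm.integrable_sq
  rw [← intervalIntegral.integral_Iic_add_Ioi (b := x) hint.integrableOn hint.integrableOn,
    ← integral_Ici_eq_integral_Ioi,
    setIntegral_Iic_norm_sq_add_norm_sq_deriv (fun t _ => hf t) (hf2.restrict _) (hf'2.restrict _),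
    setIntegral_Ici_norm_sq_add_norm_sq_deriv (fun t _ => hf t) (hf2.restrict _) (hf'2.restrict _)]
  ring

theorem two_mul_norm_sq_le_integral_norm_sq_add_norm_sq_deriv
    (hf : ∀ t, HasDerivAt f (f' t) t) (hf2 : MemLp f 2) (hf'2 : MemLp f' 2) (x : ℝ) :
    2 * ‖f x‖ ^ 2 ≤ ∫ t, (‖f t‖ ^ 2 + ‖f' t‖ ^ 2) := by
  rw [integral_norm_sq_add_norm_sq_deriv hf hf2 hf'2 x, add_assoc]
  exact le_add_of_nonneg_right (by positivity)

theorem eq_zero_of_integral_norm_sq_add_norm_sq_deriv_le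
    (hf : ∀ t, HasDerivAt f (f' t) t) (hf' : Continuous f') (hf2 : MemLp f 2) (hf'2 : MemLp f' 2)
    {x : ℝ} (hx : ∫ t, (‖f t‖ ^ 2 + ‖f' t‖ ^ 2) ≤ 2 * ‖f x‖ ^ 2) : f = 0 := by
  have hfc : Continuous f := continuous_iff_continuousAt.2 fun t => (hf t).continuousAt
  have hsplit := integral_norm_sq_add_norm_sq_deriv hf hf2 hf'2 x
  have hsub_nonneg : 0 ≤ ∫ t in Iic x, ‖f t - f' t‖ ^ 2 := by positivity
  have hadd_nonneg : 0 ≤ ∫ t in Ici x, ‖f t + f' t‖ ^ 2 := by positivity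
  have hsub_zero : ∫ t in Iic x, ‖f t - f' t‖ ^ 2 = 0 := by linarith
  have hadd_zero : ∫ t in Ici x, ‖f t + f' t‖ ^ 2 = 0 := by linarith
  have hsub : f x - f' x = 0 :=
    eqOn_zero_of_setIntegral_norm_sq_eq_zero (by simp) (hfc.sub hf').continuousOn
      ((hf2.sub hf'2).restrict _) hsub_zero self_mem_Iic
  have hadd : f x + f' x = 0 :=
    eqOn_zero_of_setIntegral_norm_sq_eq_zero (by simp) (hfc.add hf').continuousOn
      ((hf2.add hf'2).restrict _) hadd_zero self_mem_Ici
  have hfx : f x = 0 := by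
    rwa [← sub_eq_zero.1 hsub, ← two_smul ℝ, smul_eq_zero_iff_right two_ne_zero] at hadd
  funext y
  have hy : 2 * ‖f y‖ ^ 2 ≤ 0 :=
    calc 2 * ‖f y‖ ^ 2 ≤ ∫ t, (‖f t‖ ^ 2 + ‖f' t‖ ^ 2) :=
          two_mul_norm_sq_le_integral_norm_sq_add_norm_sq_deriv hf hf2 hf'2 y
      _ ≤ 2 * ‖f x‖ ^ 2 := hx
      _ = 0 := by simp [hfx]
  have hy_sq : ‖f y‖ ^ 2 = 0 := le_antisymm (by linarith) (sq_nonneg _)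
  simpa using hy_sq

theorem two_mul_norm_sq_lt_integral_norm_sq_add_norm_sq_deriv
    (hf : ∀ t, HasDerivAt f (f' t) t) (hf' : Continuous f') (hf2 : MemLp f 2) (hf'2 : MemLp f' 2)
    (hne : f ≠ 0) (x : ℝ) : 2 * ‖f x‖ ^ 2 < ∫ t, (‖f t‖ ^ 2 + ‖f' t‖ ^ 2) :=
  not_le.1 fun hx => hne (eq_zero_of_integral_norm_sq_add_norm_sq_deriv_le hf hf' hf2 hf'2 hx)

theorem integral_inner_deriv_deriv_eq_neg_integral_norm_sq_deriv
    (hf : ∀ t, HasDerivAt f (f' t) t) (hf' : ∀ t, HasDerivAt f' (f'' t) t)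
    (hf2 : MemLp f 2) (hf'2 : MemLp f' 2) (hf''2 : MemLp f'' 2) :
    ∫ t, ⟪f t, f'' t⟫_ℝ = -∫ t, ‖f' t‖ ^ 2 := by
  simp only [← real_inner_self_eq_norm_sq]
  exact integral_bilinear_hasDerivAt_right_eq_neg_left_of_integrable (L := innerSL ℝ)
    (fun t _ => hf t) (fun t _ => hf' t) (integrable_inner_of_memLp_two hf2 hf''2)
    (integrable_inner_of_memLp_two hf'2 hf'2) (integrable_inner_of_memLp_two hf2 hf'2)

theorem integral_norm_sq_sub_deriv_deriv
    (hf : ∀ t, HasDerivAt f (f' t) t) (hf' : ∀ t, HasDerivAt f' (f'' t) t)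
    (hf2 : MemLp f 2) (hf'2 : MemLp f' 2) (hf''2 : MemLp f'' 2) :
    ∫ t, ‖f t - f'' t‖ ^ 2 = ∫ t, (‖f t‖ ^ 2 + 2 * ‖f' t‖ ^ 2 + ‖f'' t‖ ^ 2) := by
  have hf_sq := hf2.norm.integrable_sq
  have hf'_sq := hf'2.norm.integrable_sq.const_mul 2
  have hf''_sq := hf''2.norm.integrable_sq
  have hinner := (integrable_inner_of_memLp_two hf2 hf''2).const_mul 2
  calc ∫ t, ‖f t - f'' t‖ ^ 2
      = ∫ t, (‖f t‖ ^ 2 + ‖f'' t‖ ^ 2 - 2 * ⟪f t, f'' t⟫_ℝ) := by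
        congr with t
        rw [norm_sub_sq_real]
        ring
    _ = (∫ t, ‖f t‖ ^ 2) + (∫ t, ‖f'' t‖ ^ 2) - 2 * ∫ t, ⟪f t, f'' t⟫_ℝ := by
        rw [integral_sub (hf_sq.fun_add hf''_sq) hinner, integral_add hf_sq hf''_sq,
          integral_const_mul]
    _ = (∫ t, ‖f t‖ ^ 2) + 2 * (∫ t, ‖f' t‖ ^ 2) + ∫ t, ‖f'' t‖ ^ 2 := by
        rw [integral_inner_deriv_deriv_eq_neg_integral_norm_sq_deriv hf hf' hf2 hf'2 hf''2]
        ring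
    _ = ∫ t, (‖f t‖ ^ 2 + 2 * ‖f' t‖ ^ 2 + ‖f'' t‖ ^ 2) := by
        rw [integral_add (hf_sq.fun_add hf'_sq) hf''_sq, integral_add hf_sq hf'_sq,
          integral_const_mul]

end Line

theorem L2_norm_of_m_bounds_amplitude_and_gradient_general {u : ℝ → E}
    (hu : Differentiable ℝ u) (hdu : Differentiable ℝ (deriv u))
    (hu2 : MemLp u 2) (hdu2 : MemLp (deriv u) 2) (hddu2 : MemLp (deriv (deriv u)) 2)
    (hne : u ≠ 0) :
    (∫ x, ‖u x - deriv (deriv u) x‖ ^ 2)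
      = (∫ x, (‖u x‖ ^ 2 + 2 * ‖deriv u x‖ ^ 2 + ‖deriv (deriv u) x‖ ^ 2))
    ∧
    ∀ x₁ x₂ : ℝ,
      2 * (‖u x₁‖ ^ 2 + ‖deriv u x₂‖ ^ 2) < ∫ x, ‖u x - deriv (deriv u) x‖ ^ 2 := by
  have hu_deriv : ∀ x, HasDerivAt u (deriv u x) x := fun x => (hu x).hasDerivAt
  have hdu_deriv : ∀ x, HasDerivAt (deriv u) (deriv (deriv u) x) x := fun x => (hdu x).hasDerivAt
  have henergy := integral_norm_sq_sub_deriv_deriv hu_deriv hdu_deriv hu2 hdu2 hddu2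
  refine ⟨henergy, fun x₁ x₂ => ?_⟩
  calc 2 * (‖u x₁‖ ^ 2 + ‖deriv u x₂‖ ^ 2)
      = 2 * ‖u x₁‖ ^ 2 + 2 * ‖deriv u x₂‖ ^ 2 := mul_add ..
    _ < (∫ x, (‖u x‖ ^ 2 + ‖deriv u x‖ ^ 2))
          + ∫ x, (‖deriv u x‖ ^ 2 + ‖deriv (deriv u) x‖ ^ 2) :=
        add_lt_add_of_lt_of_le
          (two_mul_norm_sq_lt_integral_norm_sq_add_norm_sq_deriv hu_deriv hdu.continuous hu2 hdu2
            hne x₁)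
          (two_mul_norm_sq_le_integral_norm_sq_add_norm_sq_deriv hdu_deriv hdu2 hddu2 x₂)
    _ = ∫ x, (‖u x‖ ^ 2 + 2 * ‖deriv u x‖ ^ 2 + ‖deriv (deriv u) x‖ ^ 2) := by
        rw [← integral_add (hu2.norm.integrable_sq.fun_add hdu2.norm.integrable_sq)
          (hdu2.norm.integrable_sq.fun_add hddu2.norm.integrable_sq)]
        congr with x
        ring
    _ = ∫ x, ‖u x - deriv (deriv u) x‖ ^ 2 := henergy.symm

end InnerProductSpace

/-- for a C² function with square-integrable `u`, `u'`, `u''`,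
the L² norm of `u - u''` equals the weighted H² norm, and it strictly bounds
`2(u(x₁)² + u'(x₂)²)` at every pair of points. -/
theorem L2_norm_of_m_bounds_amplitude_and_gradient
    (u : ℝ → ℝ) (hu : ContDiff ℝ 2 u)
    (hu2 : Integrable (fun x => (u x)^2))
    (hdu2 : Integrable (fun x => (deriv u x)^2))
    (hddu2 : Integrable (fun x => (deriv (deriv u) x)^2))
    (hne : u ≠ 0) :
    (∫ x, (u x - deriv (deriv u) x)^2)
      = (∫ x, ((u x)^2 + 2 * (deriv u x)^2 + (deriv (deriv u) x)^2))
    ∧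
    ∀ x₁ x₂ : ℝ,
      2 * ((u x₁)^2 + (deriv u x₂)^2) < ∫ x, (u x - deriv (deriv u) x)^2 := by
  simpa only [norm_eq_abs, sq_abs] using L2_norm_of_m_bounds_amplitude_and_gradient_general
    (hu.differentiable two_ne_zero) hu.differentiable_deriv_two
    ((memLp_two_iff_integrable_sq hu.continuous.aestronglyMeasurable).2 hu2)
    ((memLp_two_iff_integrable_sq (aestronglyMeasurable_deriv u _)).2 hdu2)
    ((memLp_two_iff_integrable_sq (aestronglyMeasurable_deriv (deriv u) _)).2 hddu2) hne
end

section
/- Let f1, g1 : ℝ → ℝ be smooth, let F1(y) = ∫_0^y f1(s) ds, and let c ∈ ℝ. Let U : ℝ → ℝ be a smooth function satisfying, for all ξ ∈ ℝ, the travelling-wave ODE −c( U' − U''' ) + U' (U − U'') f1(U² − U'²) + d/dξ[ (U − U'')( U f1(U² − U'²) + g1(U² − U'²) ) ] = 0. Then the function ξ ↦ −c( U − U'' ) + (1/2) F1(U² − U'²) + (U − U'')( U f1(U² − U'²) + g1(U² − U'²) ) is constant on ℝ (it is the first integral arising from the momentum conservation law). -/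
open Real

/-!
Write `m = U - U''`. Since `(U² - U'²)' = 2 U' m`, the only term of the equation that is not visibly
a derivative is exact as well: `U' m f1(U² - U'²) = (½ F1(U² - U'²))'` for any antiderivative `F1`
of `f1`. The equation thus says that the derivative of the first integral vanishes.
-/

theorem hasDerivAt_of_eq_integral {E : Type*} [NormedAddCommGroup E] [NormedSpace ℝ E]
    [CompleteSpace E] {f F : ℝ → E} {a : ℝ} (hf : Continuous f)
    (hF : ∀ y, F y = ∫ s in a..y, f s) (y : ℝ) : HasDerivAt F (f y) y := by
  rw [funext hF]
  exact (hf.integral_hasStrictDerivAt a y).hasDerivAt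

section FirstIntegral

variable {𝕜 : Type*} [NontriviallyNormedField 𝕜] {u v w F Q : 𝕜 → 𝕜} {a b q x : 𝕜}

theorem hasDerivAt_sq_sub_deriv_sq (hu : HasDerivAt u (v x) x) (hv : HasDerivAt v a x) :
    HasDerivAt (fun s => u s ^ 2 - v s ^ 2) (2 * (v x * (u x - a))) x :=
  ((hu.fun_pow 2).fun_sub (hv.fun_pow 2)).congr_deriv (by ring)

theorem hasDerivAt_half_mul_comp_sq_sub_deriv_sq [NeZero (2 : 𝕜)]
    (hu : HasDerivAt u (v x) x) (hv : HasDerivAt v a x)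
    (hF : HasDerivAt F b (u x ^ 2 - v x ^ 2)) :
    HasDerivAt (fun s => 1 / 2 * F (u s ^ 2 - v s ^ 2)) (v x * (u x - a) * b) x :=
  ((hF.comp x (hasDerivAt_sq_sub_deriv_sq hu hv)).const_mul (1 / 2)).congr_deriv (by field_simp)

theorem hasDerivAt_firstIntegral [NeZero (2 : 𝕜)] (c : 𝕜)
    (hu : HasDerivAt u (v x) x) (hv : HasDerivAt v (w x) x) (hw : HasDerivAt w a x)
    (hF : HasDerivAt F b (u x ^ 2 - v x ^ 2)) (hQ : HasDerivAt Q q x) :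
    HasDerivAt (fun s => -c * (u s - w s) + 1 / 2 * F (u s ^ 2 - v s ^ 2) + Q s)
      (-c * (v x - a) + v x * (u x - w x) * b + q) x :=
  (((hu.fun_sub hw).const_mul (-c)).fun_add
    (hasDerivAt_half_mul_comp_sq_sub_deriv_sq hu hv hF)).fun_add hQ

end FirstIntegral

theorem momentum_first_integral_general {f F U Q : ℝ → ℝ} (c : ℝ)
    (hF : ∀ y, HasDerivAt F (f y) y)
    (hU : Differentiable ℝ U) (hU' : Differentiable ℝ (deriv U))
    (hU'' : Differentiable ℝ (deriv (deriv U))) (hQ : Differentiable ℝ Q)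
    (hode : ∀ ξ, -c * (deriv U ξ - deriv (deriv (deriv U)) ξ)
      + deriv U ξ * (U ξ - deriv (deriv U) ξ) * f (U ξ ^ 2 - deriv U ξ ^ 2) + deriv Q ξ = 0) :
    ∃ C, ∀ ξ, -c * (U ξ - deriv (deriv U) ξ)
      + 1 / 2 * F (U ξ ^ 2 - deriv U ξ ^ 2) + Q ξ = C := by
  have hderiv (ξ : ℝ) : HasDerivAt (fun s => -c * (U s - deriv (deriv U) s)
      + 1 / 2 * F (U s ^ 2 - deriv U s ^ 2) + Q s) 0 ξ :=
    (hasDerivAt_firstIntegral c (hU ξ).hasDerivAt (hU' ξ).hasDerivAt (hU'' ξ).hasDerivAt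
      (hF _) (hQ ξ).hasDerivAt).congr_deriv (hode ξ)
  exact ⟨_, fun ξ => is_const_of_deriv_eq_zero
    (fun s => (hderiv s).differentiableAt) (fun s => (hderiv s).deriv) ξ 0⟩

/-- first integral of the travelling-wave ODE arising from the
momentum conservation law. -/
theorem momentum_first_integral
    (f1 g1 : ℝ → ℝ) (hf1 : ContDiff ℝ (⊤ : ℕ∞) f1) (hg1 : ContDiff ℝ (⊤ : ℕ∞) g1)
    (F1 : ℝ → ℝ) (hF1 : ∀ y : ℝ, F1 y = ∫ s in (0:ℝ)..y, f1 s)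
    (c : ℝ)
    (U : ℝ → ℝ) (hU : ContDiff ℝ (⊤ : ℕ∞) U)
    (hode : ∀ ξ : ℝ,
      -c * (deriv U ξ - deriv (deriv (deriv U)) ξ)
        + deriv U ξ * (U ξ - deriv (deriv U) ξ) * f1 ((U ξ)^2 - (deriv U ξ)^2)
        + deriv (fun s =>
            (U s - deriv (deriv U) s)
              * (U s * f1 ((U s)^2 - (deriv U s)^2)
                  + g1 ((U s)^2 - (deriv U s)^2))) ξ = 0) :
    ∃ C : ℝ, ∀ ξ : ℝ,
      -c * (U ξ - deriv (deriv U) ξ)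
        + (1/2) * F1 ((U ξ)^2 - (deriv U ξ)^2)
        + (U ξ - deriv (deriv U) ξ)
            * (U ξ * f1 ((U ξ)^2 - (deriv U ξ)^2)
                + g1 ((U ξ)^2 - (deriv U ξ)^2)) = C := by
  have df : Differentiable ℝ f1 := hf1.differentiable (by simp)
  have dg : Differentiable ℝ g1 := hg1.differentiable (by simp)
  have dU : Differentiable ℝ U := hU.differentiable (by simp)
  have dU' : Differentiable ℝ (deriv U) := (hU.iterate_deriv 1).differentiable (by simp)
  have dU'' : Differentiable ℝ (deriv (deriv U)) := (hU.iterate_deriv 2).differentiable (by simp)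
  exact momentum_first_integral_general c (hasDerivAt_of_eq_integral hf1.continuous hF1)
    dU dU' dU'' (by fun_prop) hode
end

section
/- Let f1, g1 : ℝ → ℝ be smooth, let G1(y) = ∫_0^y g1(s) ds, and let c ∈ ℝ. Let U : ℝ → ℝ be a smooth function satisfying, for all ξ ∈ ℝ, the travelling-wave ODE −c( U' − U''' ) + U' (U − U'') f1(U² − U'²) + d/dξ[ (U − U'')( U f1(U² − U'²) + g1(U² − U'²) ) ] = 0. Then the function ξ ↦ −c( U² + U'² ) + 2c U U'' − G1(U² − U'²) + 2U (U − U'')( U f1(U² − U'²) + g1(U² − U'²) ) is constant on ℝ (it is the first integral arising from the H¹ conservation law). -/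
open Real

/-!
The multiplier that yields the first integral is `2 U`: since the derivative of `U² - U'²` is
`2 U' (U - U'')`, the terms in `f₁` and `g₁` of `2 U` times the ODE combine into the exact
derivative of `2 U (U - U'') (U f₁ + g₁) - G₁`, and the terms in `c` are exact as well.
-/

section NontriviallyNormedField

variable {𝕜 : Type*} [NontriviallyNormedField 𝕜]

/-- The momentum flux `m (U f + g)` of the profile `U`, where `m = U - U''` and `f`, `g` are
evaluated at `U² - U'²`. -/
noncomputable def momentumFlux (f g U : 𝕜 → 𝕜) (ξ : 𝕜) : 𝕜 :=
  (U ξ - deriv (deriv U) ξ) *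
    (U ξ * f ((U ξ) ^ 2 - (deriv U ξ) ^ 2) + g ((U ξ) ^ 2 - (deriv U ξ) ^ 2))

/-- The left-hand side of the travelling-wave ODE with wave speed `c`; a profile `U` is a
travelling wave when it vanishes identically. -/
noncomputable def travelingWaveResidual (f g : 𝕜 → 𝕜) (c : 𝕜) (U : 𝕜 → 𝕜) (ξ : 𝕜) : 𝕜 :=
  -c * (deriv U ξ - deriv (deriv (deriv U)) ξ)
    + deriv U ξ * (U ξ - deriv (deriv U) ξ) * f ((U ξ) ^ 2 - (deriv U ξ) ^ 2)
    + deriv (momentumFlux f g U) ξ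

/-- The quantity attached to a profile `U` by the `H¹` conservation law. The function `G` stands
for an antiderivative of `g`. -/
noncomputable def travelingWaveH1Integral (f g G : 𝕜 → 𝕜) (c : 𝕜) (U : 𝕜 → 𝕜) (ξ : 𝕜) : 𝕜 :=
  -c * ((U ξ) ^ 2 + (deriv U ξ) ^ 2) + 2 * c * U ξ * deriv (deriv U) ξ
    - G ((U ξ) ^ 2 - (deriv U ξ) ^ 2) + 2 * U ξ * momentumFlux f g U ξ

variable {f g G U : 𝕜 → 𝕜} {ξ : 𝕜}

theorem hasDerivAt_sq_sub_deriv_sq_s12 (hU : DifferentiableAt 𝕜 U ξ)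
    (hU' : DifferentiableAt 𝕜 (deriv U) ξ) :
    HasDerivAt (fun s ↦ (U s) ^ 2 - (deriv U s) ^ 2)
      (2 * deriv U ξ * (U ξ - deriv (deriv U) ξ)) ξ := by
  refine ((hU.hasDerivAt.fun_pow 2).fun_sub (hU'.hasDerivAt.fun_pow 2)).congr_deriv ?_
  push_cast
  ring

theorem differentiable_momentumFlux (hf : Differentiable 𝕜 f) (hg : Differentiable 𝕜 g)
    (hU : Differentiable 𝕜 U) (hU' : Differentiable 𝕜 (deriv U))
    (hU'' : Differentiable 𝕜 (deriv (deriv U))) :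
    Differentiable 𝕜 (momentumFlux f g U) := by
  unfold momentumFlux
  fun_prop

theorem hasDerivAt_travelingWaveH1Integral (c : 𝕜) (hU : DifferentiableAt 𝕜 U ξ)
    (hU' : DifferentiableAt 𝕜 (deriv U) ξ) (hU'' : DifferentiableAt 𝕜 (deriv (deriv U)) ξ)
    (hflux : DifferentiableAt 𝕜 (momentumFlux f g U) ξ)
    (hG : HasDerivAt G (g ((U ξ) ^ 2 - (deriv U ξ) ^ 2)) ((U ξ) ^ 2 - (deriv U ξ) ^ 2)) :
    HasDerivAt (travelingWaveH1Integral f g G c U)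
      (2 * U ξ * travelingWaveResidual f g c U ξ) ξ := by
  have h_energy :
      HasDerivAt (fun s ↦ -c * ((U s) ^ 2 + (deriv U s) ^ 2))
        (-c * (2 * deriv U ξ * (U ξ + deriv (deriv U) ξ))) ξ := by
    refine (((hU.hasDerivAt.fun_pow 2).fun_add
      (hU'.hasDerivAt.fun_pow 2)).const_mul (-c)).congr_deriv ?_
    push_cast
    ring
  have h_dispersion :
      HasDerivAt (fun s ↦ 2 * c * U s * deriv (deriv U) s)
        (2 * c * deriv U ξ * deriv (deriv U) ξ + 2 * c * U ξ * deriv (deriv (deriv U)) ξ) ξ :=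
    (hU.hasDerivAt.const_mul (2 * c)).fun_mul hU''.hasDerivAt
  have h_potential :
      HasDerivAt (fun s ↦ G ((U s) ^ 2 - (deriv U s) ^ 2))
        (g ((U ξ) ^ 2 - (deriv U ξ) ^ 2) * (2 * deriv U ξ * (U ξ - deriv (deriv U) ξ))) ξ :=
    hG.comp ξ (hasDerivAt_sq_sub_deriv_sq_s12 hU hU')
  have h_flux :
      HasDerivAt (fun s ↦ 2 * U s * momentumFlux f g U s)
        (2 * deriv U ξ * momentumFlux f g U ξ + 2 * U ξ * deriv (momentumFlux f g U) ξ) ξ :=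
    (hU.hasDerivAt.const_mul 2).fun_mul hflux.hasDerivAt
  refine (((h_energy.fun_add h_dispersion).fun_sub h_potential).fun_add h_flux).congr_deriv ?_
  rw [travelingWaveResidual, momentumFlux]
  ring

end NontriviallyNormedField

theorem H1_first_integral_general {𝕜 : Type*} [RCLike 𝕜] {f g G : 𝕜 → 𝕜} {c : 𝕜} {U : 𝕜 → 𝕜}
    (hU : Differentiable 𝕜 U) (hU' : Differentiable 𝕜 (deriv U))
    (hU'' : Differentiable 𝕜 (deriv (deriv U))) (hflux : Differentiable 𝕜 (momentumFlux f g U))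
    (hG : ∀ y, HasDerivAt G (g y) y) (hode : ∀ ξ, travelingWaveResidual f g c U ξ = 0) :
    ∃ C : 𝕜, ∀ ξ, travelingWaveH1Integral f g G c U ξ = C := by
  have h_deriv (ξ : 𝕜) : HasDerivAt (travelingWaveH1Integral f g G c U) 0 ξ := by
    simpa only [hode ξ, mul_zero] using
      hasDerivAt_travelingWaveH1Integral c (hU ξ) (hU' ξ) (hU'' ξ) (hflux ξ) (hG _)
  exact ⟨_, fun ξ ↦ is_const_of_deriv_eq_zero (fun x ↦ (h_deriv x).differentiableAt)
    (fun x ↦ (h_deriv x).deriv) ξ 0⟩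

/-- first integral of the travelling-wave ODE arising from the
H¹ conservation law. -/
theorem H1_first_integral
    (f1 g1 : ℝ → ℝ) (hf1 : ContDiff ℝ (⊤ : ℕ∞) f1) (hg1 : ContDiff ℝ (⊤ : ℕ∞) g1)
    (G1 : ℝ → ℝ) (hG1 : ∀ y : ℝ, G1 y = ∫ s in (0:ℝ)..y, g1 s)
    (c : ℝ)
    (U : ℝ → ℝ) (hU : ContDiff ℝ (⊤ : ℕ∞) U)
    (hode : ∀ ξ : ℝ,
      -c * (deriv U ξ - deriv (deriv (deriv U)) ξ)
        + deriv U ξ * (U ξ - deriv (deriv U) ξ) * f1 ((U ξ)^2 - (deriv U ξ)^2)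
        + deriv (fun s =>
            (U s - deriv (deriv U) s)
              * (U s * f1 ((U s)^2 - (deriv U s)^2)
                  + g1 ((U s)^2 - (deriv U s)^2))) ξ = 0) :
    ∃ C : ℝ, ∀ ξ : ℝ,
      -c * ((U ξ)^2 + (deriv U ξ)^2)
        + 2 * c * U ξ * deriv (deriv U) ξ
        - G1 ((U ξ)^2 - (deriv U ξ)^2)
        + 2 * U ξ * (U ξ - deriv (deriv U) ξ)
            * (U ξ * f1 ((U ξ)^2 - (deriv U ξ)^2)
                + g1 ((U ξ)^2 - (deriv U ξ)^2)) = C := by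
  have h_diff (n : ℕ) : Differentiable ℝ (deriv^[n] U) :=
    (hU.iterate_deriv n).differentiable (by simp)
  have hflux : Differentiable ℝ (momentumFlux f1 g1 U) :=
    differentiable_momentumFlux (hf1.differentiable (by simp)) (hg1.differentiable (by simp))
      (h_diff 0) (h_diff 1) (h_diff 2)
  have hG (y : ℝ) : HasDerivAt G1 (g1 y) y :=
    funext hG1 ▸ (hg1.continuous.integral_hasStrictDerivAt 0 y).hasDerivAt
  simpa only [travelingWaveH1Integral, momentumFlux, mul_assoc] using
    H1_first_integral_general (U := U) (h_diff 0) (h_diff 1) (h_diff 2) hflux hG hode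
end
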